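/- Quadratic decay of the Stokes potential of a mean-zero compactly supported field. Let g : ℝ³ → ℝ³ be a continuous compactly supported vector field with ∫_{ℝ³} g(y) dy = 0. Then the function V : ℝ³ → ℝ³ defined componentwise by V_i(x) = ∫_{ℝ³} G_ij(x−y) g_j(y) dy (summation over j) is well defined, and there exists a constant C (depending on g) such that |V(x)| ≤ C (1+|x|)^{−2} for all x ∈ ℝ³. -/

import Mathlib

open MeasureTheory Real Metric Filter

noncomputable section

abbrev E3 : Type := EuclideanSpace ℝ (Fin 3)

/-- the Green (Oseen) tensor of the Stokes operator -/
def G (i j : Fin 3) (x : E3) : ℝ :=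
  (1 / (8 * π)) * ((if i = j then 1 else 0) / ‖x‖ + x i * x j / ‖x‖ ^ 3)

lemma abs_G_le (i j : Fin 3) (z : E3) : |G i j z| ≤ ‖z‖⁻¹ := by
  have h8 : |1 / (8 * π)| ≤ 1 / 2 := by
    rw [abs_of_pos (by positivity)]
    exact one_div_le_one_div_of_le (by norm_num) (by linarith [pi_gt_three])
  have h1 : |(if i = j then (1 : ℝ) else 0) / ‖z‖| ≤ ‖z‖⁻¹ := by
    split_ifs <;> simp
  have h2 : |z i * z j / ‖z‖ ^ 3| ≤ ‖z‖⁻¹ := by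
    rcases eq_or_ne z 0 with rfl | hz
    · simp
    have hz' : 0 < ‖z‖ := norm_pos_iff.mpr hz
    rw [abs_div, abs_mul, abs_of_pos (pow_pos hz' 3), div_le_iff₀ (pow_pos hz' 3)]
    calc |z i| * |z j| ≤ ‖z‖ * ‖z‖ := by
          gcongr
          · exact PiLp.norm_apply_le z i
          · exact PiLp.norm_apply_le z j
      _ = ‖z‖⁻¹ * ‖z‖ ^ 3 := by field_simp
  unfold G
  rw [abs_mul]
  calc _ ≤ 1 / 2 * (‖z‖⁻¹ + ‖z‖⁻¹) :=
        mul_le_mul h8 ((abs_add_le _ _).trans (add_le_add h1 h2)) (abs_nonneg _) (by norm_num)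
    _ = ‖z‖⁻¹ := by ring

lemma abs_G_sub_le (i j : Fin 3) {a b : E3} (hb : b ≠ 0) (hab : ‖b‖ / 2 ≤ ‖a‖) :
    |G i j a - G i j b| ≤ 28 * ‖a - b‖ * ‖b‖⁻¹ ^ 2 := by
  have hs : 0 < ‖b‖ := norm_pos_iff.mpr hb
  have hr : 0 < ‖a‖ := by linarith
  set t := ‖a‖⁻¹ with ht
  set q := ‖b‖⁻¹ with hq
  set d := ‖a - b‖ with hd
  have hd0 : 0 ≤ d := norm_nonneg _
  have ht0 : 0 < t := by positivity
  have hq0 : 0 < q := by positivity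
  have htq : t ≤ 2 * q := by
    rw [ht, hq, ← div_eq_mul_inv, inv_le_comm₀ hr (by positivity), inv_div]
    exact hab
  have h8 : |1 / (8 * π)| ≤ 1 := by
    rw [abs_of_pos (by positivity)]
    exact (div_le_one (by positivity)).2 (by linarith [pi_gt_three])
  have hdiff : |t - q| ≤ d * (2 * q) * q := by
    have h : t - q = (‖b‖ - ‖a‖) * t * q := by rw [ht, hq]; field_simp
    rw [h, abs_mul, abs_mul, abs_of_pos ht0, abs_of_pos hq0]
    have : |‖b‖ - ‖a‖| ≤ d := by
      rw [hd, norm_sub_rev]; exact abs_norm_sub_norm_le b a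
    gcongr
  have hat : ∀ k, |a k| * t ≤ 1 := fun k => by
    rw [ht, ← div_eq_mul_inv]
    exact (div_le_one hr).2 (PiLp.norm_apply_le a k)
  have hbq : ∀ k, |b k| * q ≤ 1 := fun k => by
    rw [hq, ← div_eq_mul_inv]
    exact (div_le_one hs).2 (PiLp.norm_apply_le b k)
  have hk : ∀ k, |a k - b k| ≤ d := fun k => PiLp.norm_apply_le (a - b) k
  have e1 : |(if i = j then (1 : ℝ) else 0) * (t - q)| ≤ 2 * d * q ^ 2 := by
    split_ifs
    · rw [one_mul]; linarith
    · simp; positivity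
  have e2 : |(a i - b i) * a j * t ^ 3| ≤ 4 * d * q ^ 2 := by
    rw [abs_mul, abs_mul, abs_of_pos (pow_pos ht0 3)]
    calc _ = |a i - b i| * (|a j| * t) * t ^ 2 := by ring
      _ ≤ d * 1 * (2 * q) ^ 2 := by gcongr <;> first | exact hk _ | exact hat _
      _ = _ := by ring
  have e3 : |b i * (a j - b j) * t ^ 3| ≤ 8 * d * q ^ 2 := by
    rw [abs_mul, abs_mul, abs_of_pos (pow_pos ht0 3)]
    calc _ ≤ |b i| * d * (2 * q) ^ 3 := by gcongr; exact hk _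
      _ = (|b i| * q) * (8 * d * q ^ 2) := by ring
      _ ≤ 1 * (8 * d * q ^ 2) := by gcongr; exact hbq _
      _ = _ := by ring
  have e4 : |b i * b j * ((t - q) * (t ^ 2 + t * q + q ^ 2))| ≤ 14 * d * q ^ 2 := by
    have hp : 0 < t ^ 2 + t * q + q ^ 2 := by positivity
    rw [abs_mul, abs_mul, abs_mul, abs_of_pos hp]
    calc _ ≤ |b i| * |b j| * ((d * (2 * q) * q) * ((2 * q) ^ 2 + (2 * q) * q + q ^ 2)) := by
          gcongr
      _ = (|b i| * q) * (|b j| * q) * (14 * d * q ^ 2) := by ring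
      _ ≤ 1 * 1 * (14 * d * q ^ 2) := by gcongr <;> exact hbq _
      _ = _ := by ring
  have hG : G i j a - G i j b = 1 / (8 * π) * ((if i = j then (1 : ℝ) else 0) * (t - q) +
      (a i - b i) * a j * t ^ 3 + b i * (a j - b j) * t ^ 3 +
      b i * b j * ((t - q) * (t ^ 2 + t * q + q ^ 2))) := by
    simp only [G, div_eq_mul_inv, ← inv_pow, ← ht, ← hq]
    ring
  rw [hG, abs_mul]
  refine (mul_le_of_le_one_left (abs_nonneg _) h8).trans ?_
  refine (abs_add_le _ _).trans ?_
  refine (add_le_add ((abs_add_le _ _).trans (add_le_add (abs_add_le _ _) le_rfl)) le_rfl).trans ?_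
  linarith

lemma measurable_G (i j : Fin 3) : Measurable (G i j) := by
  unfold G
  fun_prop

/-- The singular part of the function `z ↦ ‖z‖⁻¹` -/
def truncatedInvNorm (z : E3) : ℝ := (Set.Iio 1).indicator (fun r : ℝ => r⁻¹) ‖z‖

lemma truncatedInvNorm_nonneg (z : E3) : 0 ≤ truncatedInvNorm z :=
  Set.indicator_apply_nonneg fun _ => by positivity

lemma inv_norm_le (z : E3) : ‖z‖⁻¹ ≤ 1 + truncatedInvNorm z := by
  unfold truncatedInvNorm
  by_cases h : ‖z‖ < 1
  · rw [Set.indicator_of_mem (Set.mem_Iio.2 h)]; linarith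
  · rw [Set.indicator_of_notMem (by simpa using h), add_zero]
    exact inv_le_one_of_one_le₀ (not_lt.1 h)

lemma integrable_truncatedInvNorm : Integrable truncatedInvNorm := by
  unfold truncatedInvNorm
  rw [integrable_fun_norm_addHaar (volume : Measure E3)
    (f := (Set.Iio 1).indicator (fun r : ℝ => r⁻¹))]
  have h : IntegrableOn ((Set.Ioo 0 1).indicator fun r : ℝ => r) (Set.Ioi 0) := by
    apply Integrable.integrableOn
    rw [integrable_indicator_iff measurableSet_Ioo]
    exact (continuous_id.integrableOn_Icc (a := (0 : ℝ)) (b := 1)).mono_set Set.Ioo_subset_Icc_self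
  refine h.congr_fun (fun r hr => ?_) measurableSet_Ioi
  have hr0 : 0 < r := hr
  by_cases h1 : r < 1
  · simp [Set.indicator, h1, hr0]
    field_simp
  · simp [Set.indicator, h1]

lemma abs_sum_mul_le {c : ℝ} {a : Fin 3 → ℝ} (ha : ∀ j, |a j| ≤ c) (v : E3) :
    |∑ j, a j * v j| ≤ 3 * c * ‖v‖ := by
  have hc : 0 ≤ c := (abs_nonneg _).trans (ha 0)
  calc |∑ j, a j * v j| ≤ ∑ j, |a j * v j| := Finset.abs_sum_le_sum_abs _ _
    _ ≤ ∑ _j : Fin 3, c * ‖v‖ := Finset.sum_le_sum fun j _ => by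
        rw [abs_mul]
        exact mul_le_mul (ha j) (PiLp.norm_apply_le v j) (abs_nonneg _) hc
    _ = 3 * c * ‖v‖ := by simp; ring

lemma norm_le_three_mul {v : E3} {c : ℝ} (h : ∀ i, |v i| ≤ c) : ‖v‖ ≤ 3 * c := by
  have hc : 0 ≤ c := (abs_nonneg _).trans (h 0)
  refine abs_le_of_sq_le_sq' ?_ (by positivity) |>.2
  rw [EuclideanSpace.norm_sq_eq]
  calc ∑ i, ‖v i‖ ^ 2 ≤ ∑ _i : Fin 3, c ^ 2 := Finset.sum_le_sum fun i _ =>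
        pow_le_pow_left₀ (norm_nonneg _) (h i) 2
    _ ≤ (3 * c) ^ 2 := by simp; nlinarith

lemma abs_sum_G_mul_le {M : ℝ} {v : E3} (hv : ‖v‖ ≤ M) (i : Fin 3) (z : E3) :
    |∑ j, G i j z * v j| ≤ 3 * (‖v‖ + M * truncatedInvNorm z) := by
  refine (abs_sum_mul_le (fun j => (abs_G_le i j z).trans (inv_norm_le z)) v).trans ?_
  nlinarith [mul_le_mul_of_nonneg_right hv (truncatedInvNorm_nonneg z)]

lemma abs_sum_G_sub_mul_le {R : ℝ} {x y v : E3} (hy : ‖y‖ ≤ R) (hx : 2 * R < ‖x‖) (i : Fin 3) :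
    |∑ j, (G i j (x - y) - G i j x) * v j| ≤ 84 * R * ‖x‖⁻¹ ^ 2 * ‖v‖ := by
  have hR : 0 ≤ R := (norm_nonneg y).trans hy
  have hx0 : x ≠ 0 := norm_pos_iff.1 (by linarith)
  have hxy : ‖x‖ / 2 ≤ ‖x - y‖ := by linarith [norm_sub_norm_le x y]
  have key : ∀ j, |G i j (x - y) - G i j x| ≤ 28 * R * ‖x‖⁻¹ ^ 2 := fun j => by
    refine (abs_G_sub_le i j hx0 hxy).trans ?_
    rw [sub_sub_cancel_left, norm_neg]
    gcongr
  exact (abs_sum_mul_le key v).trans_eq (by ring)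

lemma exists_norm_le_mul_rpow_neg_two {V : E3 → E3} {B D R : ℝ}
    (hnear : ∀ x i, |V x i| ≤ B)
    (hfar : ∀ x i, 2 * R < ‖x‖ → |V x i| ≤ D * ‖x‖⁻¹ ^ 2) (hR0 : 0 ≤ R) (hD0 : 0 ≤ D) :
    ∃ C : ℝ, ∀ x : E3, ‖V x‖ ≤ C * (1 + ‖x‖) ^ (-2 : ℝ) := by
  have hB0 : 0 ≤ B := (abs_nonneg _).trans (hnear 0 0)
  refine ⟨3 * (B * (2 + 2 * R) ^ 2 + 4 * D), fun x => ?_⟩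
  have h1x : 0 < 1 + ‖x‖ := by positivity
  rw [rpow_neg h1x.le, rpow_two, mul_assoc]
  refine norm_le_three_mul fun i => ?_
  rw [← div_eq_mul_inv, le_div_iff₀ (by positivity)]
  rcases le_or_gt ‖x‖ (1 + 2 * R) with hx | hx
  · calc |V x i| * (1 + ‖x‖) ^ 2 ≤ B * (2 + 2 * R) ^ 2 :=
          mul_le_mul (hnear x i) (pow_le_pow_left₀ h1x.le (by linarith) 2) (sq_nonneg _) hB0
      _ ≤ B * (2 + 2 * R) ^ 2 + 4 * D := by linarith
  · have hx0 : 0 < ‖x‖ := by linarith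
    calc |V x i| * (1 + ‖x‖) ^ 2 ≤ D * ‖x‖⁻¹ ^ 2 * (2 * ‖x‖) ^ 2 := by
          exact mul_le_mul (hfar x i (by linarith)) (pow_le_pow_left₀ h1x.le (by linarith) 2)
            (sq_nonneg _) (by positivity)
      _ = 4 * D := by field_simp; ring
      _ ≤ B * (2 + 2 * R) ^ 2 + 4 * D := by
          linarith [mul_nonneg hB0 (sq_nonneg (2 + 2 * R))]

theorem stokes_potential_quadratic_decay (g : E3 → E3)
    (hgc : Continuous g) (hgs : HasCompactSupport g)
    (hg0 : (∫ y : E3, g y) = 0) :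
    (∀ (x : E3) (i : Fin 3),
      Integrable (fun y : E3 => ∑ j, G i j (x - y) * g y j)) ∧
    ∀ V : E3 → E3,
      (∀ (x : E3) (i : Fin 3), V x i = ∫ y : E3, ∑ j, G i j (x - y) * g y j) →
      ∃ C : ℝ, ∀ x : E3, ‖V x‖ ≤ C * (1 + ‖x‖) ^ (-2 : ℝ) := by
  obtain ⟨M, hM⟩ := hgc.bounded_above_of_compact_support hgs
  obtain ⟨R, hR0, hR⟩ : ∃ R : ℝ, 0 ≤ R ∧ ∀ y, g y ≠ 0 → ‖y‖ ≤ R := by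
    obtain ⟨R, hR⟩ := hgs.isCompact.isBounded.exists_norm_le
    exact ⟨max R 0, le_max_right _ _,
      fun y hy => (hR y (subset_tsupport g hy)).trans (le_max_left _ _)⟩
  have hgi : Integrable g := hgc.integrable_of_hasCompactSupport hgs
  have hcoord : ∀ j, Integrable (fun y => g y j) := fun j =>
    (EuclideanSpace.proj j : E3 →L[ℝ] ℝ).integrable_comp hgi
  have hcoord0 : ∀ j, ∫ y, g y j = 0 := fun j => by
    simpa [hg0] using
      (EuclideanSpace.proj j : E3 →L[ℝ] ℝ).integral_comp_comm hgi
  have hdom : ∀ x : E3, Integrable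
      (fun y : E3 => 3 * (‖g y‖ + M * truncatedInvNorm (x - y))) := fun x =>
    (hgi.norm.add ((integrable_truncatedInvNorm.comp_sub_left x).const_mul M)).const_mul 3
  have hint : ∀ (x : E3) (i : Fin 3),
      Integrable (fun y : E3 => ∑ j, G i j (x - y) * g y j) := fun x i => by
    refine (hdom x).mono' (Measurable.aestronglyMeasurable ?_)
      (.of_forall fun y => abs_sum_G_mul_le (hM y) i (x - y))
    have hm : ∀ j, Measurable fun y => G i j (x - y) := fun j =>
      (measurable_G i j).comp (by fun_prop)
    have hg' : Measurable g := hgc.measurable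
    fun_prop
  refine ⟨hint, fun V hV => ?_⟩
  set B : ℝ := 3 * ((∫ y, ‖g y‖) + M * ∫ z, truncatedInvNorm z)
  have hnear : ∀ x i, |V x i| ≤ B := fun x i => by
    rw [hV, ← norm_eq_abs]
    refine (norm_integral_le_of_norm_le (hdom x)
      (.of_forall fun y => abs_sum_G_mul_le (hM y) i (x - y))).trans_eq ?_
    rw [integral_const_mul, integral_add hgi.norm
      ((integrable_truncatedInvNorm.comp_sub_left x).const_mul M), integral_const_mul,
      integral_sub_left_eq_self truncatedInvNorm volume x]
  set D : ℝ := 84 * R * ∫ y, ‖g y‖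
  have hD0 : 0 ≤ D := by positivity
  have hfar : ∀ x i, 2 * R < ‖x‖ → |V x i| ≤ D * ‖x‖⁻¹ ^ 2 := fun x i hx => by
    have hconst : ∀ j, Integrable fun y => G i j x * g y j := fun j => (hcoord j).const_mul _
    have hzero : ∫ y, ∑ j, G i j x * g y j = 0 := by
      rw [integral_finsetSum _ fun j _ => hconst j]
      simp [integral_const_mul, hcoord0]
    have hVx : V x i = ∫ y, ∑ j, (G i j (x - y) - G i j x) * g y j := by
      rw [hV, ← sub_zero (∫ y, _), ← hzero,
        ← integral_sub (hint x i) (integrable_finsetSum _ fun j _ => hconst j)]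
      simp only [sub_mul, Finset.sum_sub_distrib]
    rw [hVx, ← norm_eq_abs]
    refine (norm_integral_le_of_norm_le (hgi.norm.const_mul (84 * R * ‖x‖⁻¹ ^ 2))
      (.of_forall fun y => ?_)).trans_eq ?_
    · by_cases hy : g y = 0
      · simp [hy]
      · exact abs_sum_G_sub_mul_le (hR y hy) hx i
    · rw [integral_const_mul]; ring
  exact exists_norm_le_mul_rpow_neg_two hnear hfar hR0 hD0
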